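/- Let k be a field of characteristic zero and X = {1, 2} with 1 ≺ 2. In the free algebra k⟨X⟩, define the partial Bell differential polynomials B_{n,m} by B_{0,0} = 1, B_{n,m} = 0 if m = 0 < n or m > n, and B_{n,m} = E(2)·B_{n−1,m−1} + E(1)·B_{n−1,m} − B_{n−1,m}·E(1). Then B_{n,m} = Σ (n! / (t₀!·t₁!⋯t_r!)) · E(2)^{t₀} · ∏_{i=1}^{r} (C(α_i)·E(α_i) / |α_i|!)^{t_i}, where the sum is over all t₀ ≥ 0, all r ≥ 0, all strictly decreasing tuples of Lyndon words over X with 2 ≻ α₁ ≻ α₂ ≻ ⋯ ≻ α_r ≻ 1, and all tuples of positive integers (t₁, …, t_r) such that t₀ + Σ_{i=1}^{r} t_i·α_i(2) = m and Σ_{i=1}^{r} t_i·α_i(1) = n−m, the product ∏_{i=1}^{r} being taken in this decreasing order of the α_i. -/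

import Mathlib

/-- A nonempty word over a linearly ordered alphabet is a Lyndon word if it is
strictly lexicographically smaller than every nontrivial rotation of itself
(vacuously true for single letters). -/
def IsLyndon {X : Type*} [LinearOrder X] (w : List X) : Prop :=
  w ≠ [] ∧ ∀ u v : List X, u ≠ [] → v ≠ [] → w = u ++ v → List.Lex (· < ·) w (v ++ u)

/-!
Replace `E w` by a matrix supported on the `|w|`-th subdiagonal, so that words longer than `N`
vanish and the diagonal matrix `H` with entries `0, …, N` satisfies `[H, E w] = |w| E w`. Let `K` be
the decreasing product of the exponentials of `(C α / |α|!) E α` over the Lyndon words `α` of length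
at most `N` other than the least letter `⊥`. The Bell recursion is the first column of
`(H - ∑ x, E x) K = K (H - E ⊥)`.

To prove this identity, split off the factors of `K` from the largest word `a` downwards, keeping
`H - V` where `V` is a combination of the words `u ≤ a` whose proper suffixes all exceed `a`.
Conjugation by the factor of `a` adds a multiple of `E a` to `H`, which cancels the term of `a` in
`V`, and turns every other `E u` into `∑ j, c ^ j / j! E (u a ^ j)`, because the standard
factorization of `u a ^ (j + 1)` is `(u a ^ j, a)`. The words `u a ^ j` are exactly those that the
next step requires, and their coefficients satisfy the recursion for `C`.
-/

section Words

variable {X : Type*}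

/-- Every nonempty suffix of the word satisfies `Q`. -/
def ForallSuffix (Q : List X → Prop) (w : List X) : Prop :=
  ∀ s, s <:+ w → s ≠ [] → Q s

theorem ForallSuffix.nil {Q : List X → Prop} : ForallSuffix Q [] :=
  fun _ hs hne => absurd (List.suffix_nil.1 hs) hne

theorem ForallSuffix.cons {Q : List X → Prop} {x : X} {w : List X} (h : Q (x :: w))
    (hw : ForallSuffix Q w) : ForallSuffix Q (x :: w) := fun s hs hne =>
  (List.suffix_cons_iff.1 hs).elim (fun e => e ▸ h) fun hs => hw s hs hne

theorem ForallSuffix.of_suffix {Q : List X → Prop} {v w : List X} (hw : ForallSuffix Q w)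
    (h : v <:+ w) : ForallSuffix Q v :=
  fun s hs hne => hw s (hs.trans h) hne

theorem ForallSuffix.mono {P Q : List X → Prop} {w : List X} (hw : ForallSuffix P w)
    (h : ∀ s, P s → Q s) : ForallSuffix Q w :=
  fun s hs hne => h s (hw s hs hne)

/-- The `j`-fold concatenation `a ^ j`. -/
def wordPow (a : List X) (j : ℕ) : List X := (List.replicate j a).flatten

@[simp] theorem wordPow_zero (a : List X) : wordPow a 0 = [] := rfl

theorem wordPow_succ (a : List X) (j : ℕ) : wordPow a (j + 1) = wordPow a j ++ a := by
  simp [wordPow, List.replicate_succ']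

theorem append_wordPow_succ (u a : List X) (j : ℕ) :
    u ++ wordPow a (j + 1) = (u ++ wordPow a j) ++ a := by
  rw [wordPow_succ, List.append_assoc]

theorem length_wordPow (a : List X) (j : ℕ) : (wordPow a j).length = j * a.length := by
  simp [wordPow]

end Words

section OrderedWords

variable {X : Type*} [LinearOrder X]

theorem le_append (u v : List X) : u ≤ u ++ v :=
  not_lt.1 fun h => List.le_append_left h

theorem prefix_or_forall_append_lt {u v : List X} (h : u < v) :
    u <+: v ∨ ∀ s t : List X, u ++ s < v ++ t := by
  replace h : List.Lex (· < ·) u v := h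
  induction h with
  | nil => exact .inl List.nil_prefix
  | cons _ ih => exact ih.imp (by simp) fun ih s t => List.Lex.cons (ih s t)
  | rel h => exact .inr fun s t => List.Lex.rel h

theorem singleton_bot_le [OrderBot X] {w : List X} (hw : w ≠ []) : [⊥] ≤ w := by
  obtain ⟨x, w, rfl⟩ := List.exists_cons_of_ne_nil hw
  rcases (bot_le (a := x)).eq_or_lt with rfl | hlt
  · exact le_append [⊥] w
  · exact le_of_lt (List.Lex.rel hlt)

theorem ForallSuffix.append {Q : List X → Prop} (hQ : Monotone Q) {u v : List X}
    (hu : ForallSuffix Q u) (hv : ForallSuffix Q v) : ForallSuffix Q (u ++ v) := by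
  induction u with
  | nil => exact hv
  | cons x u ih =>
    exact .cons (hQ (le_append (x :: u) v) (hu _ List.suffix_rfl (by simp)))
      (ih (hu.of_suffix (List.suffix_cons x u)))

theorem IsLyndon.forallSuffix_tail {w : List X} (hw : IsLyndon w) :
    ForallSuffix (w < ·) w.tail := by
  intro v hv hv0
  obtain ⟨u, hu0, rfl⟩ : ∃ u, u ≠ [] ∧ u ++ v = w := by
    obtain ⟨x, w, rfl⟩ := List.exists_cons_of_ne_nil hw.1
    obtain ⟨u, rfl⟩ := hv
    exact ⟨x :: u, by simp, rfl⟩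
  have hrot : u ++ v < v ++ u := hw.2 u v hu0 hv0 rfl
  by_contra hlt
  have hvw : v < u ++ v := lt_of_le_of_ne (not_lt.1 hlt) fun e => hu0 (by simpa using e)
  rcases prefix_or_forall_append_lt hvw with ⟨u', hu'⟩ | hlt'
  · have hlen : u'.length = u.length := by
      have := congrArg List.length hu'
      simp only [List.length_append] at this
      omega
    have hu'u : u' < u := by
      refine lt_of_not_ge fun hle => (hrot.trans_le ?_).ne hu'.symm
      exact hle.eq_or_lt.elim (fun e => e ▸ le_rfl) fun h => (List.append_left_lt h).le
    have hu'0 : u' ≠ [] := fun e => hu0 (by simpa [e] using hlen.symm)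
    rcases prefix_or_forall_append_lt hu'u with hpre | hlt'
    · exact hu'u.ne (hpre.eq_of_length hlen)
    · exact lt_asymm (hlt' v v) (hw.2 v u' hv0 hu'0 hu'.symm)
  · exact lt_asymm hrot (by simpa using hlt' u [])

theorem isLyndon_iff {w : List X} : IsLyndon w ↔ w ≠ [] ∧ ForallSuffix (w < ·) w.tail := by
  refine ⟨fun hw => ⟨hw.1, hw.forallSuffix_tail⟩, fun ⟨hw0, hw⟩ => ⟨hw0, ?_⟩⟩
  rintro u v hu hv rfl
  refine (hw v ?_ hv).trans_le (le_append _ _)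
  exact ⟨u.tail, (List.tail_append_of_ne_nil hu).symm⟩

theorem isLyndon_singleton (x : X) : IsLyndon [x] :=
  isLyndon_iff.2 ⟨by simp, .nil⟩

theorem IsLyndon.forallSuffix_le {w : List X} (hw : IsLyndon w) : ForallSuffix (w ≤ ·) w := by
  obtain ⟨x, w, rfl⟩ := List.exists_cons_of_ne_nil hw.1
  exact .cons le_rfl (hw.forallSuffix_tail.mono fun _ => le_of_lt)

theorem IsLyndon.le_singleton_top [OrderTop X] {w : List X} (hw : IsLyndon w) : w ≤ [⊤] := by
  have singleton_le (x : X) : [x] ≤ [⊤] :=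
    (le_top (a := x)).eq_or_lt.elim (fun h => h ▸ le_rfl) fun h => le_of_lt (List.Lex.rel h)
  obtain ⟨x, v, rfl⟩ := List.exists_cons_of_ne_nil hw.1
  rcases List.eq_nil_or_concat v with rfl | ⟨v, y, rfl⟩
  · exact singleton_le x
  · exact (hw.forallSuffix_tail [y] (by simp) (by simp)).le.trans (singleton_le y)

theorem IsLyndon.append_lt {a v : List X} (ha : IsLyndon a) (hv : v ≠ []) (h : v < a) :
    v ++ a < a := by
  rcases prefix_or_forall_append_lt h with ⟨b, rfl⟩ | hlt
  · have hb : b ≠ [] := by rintro rfl; simp at h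
    have hsuf : b <:+ (v ++ b).tail := ⟨v.tail, (List.tail_append_of_ne_nil hv).symm⟩
    exact List.append_left_lt (ha.forallSuffix_tail b hsuf hb)
  · simpa using hlt a []

theorem IsLyndon.append_wordPow_lt {a v : List X} (ha : IsLyndon a) (hv : v ≠ []) (h : v < a)
    (j : ℕ) : v ++ wordPow a j < a := by
  induction j with
  | zero => simpa using h
  | succ j ih =>
    rw [append_wordPow_succ]
    exact ha.append_lt (by simp [hv]) ih

theorem IsLyndon.forallSuffix_append_wordPow {a v : List X} (ha : IsLyndon a)
    (hv : ForallSuffix (a ≤ ·) v) (j : ℕ) : ForallSuffix (a ≤ ·) (v ++ wordPow a j) := by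
  induction j with
  | zero => simpa using hv
  | succ j ih =>
    rw [append_wordPow_succ]
    exact .append (fun _ _ h h' => le_trans h' h) ih ha.forallSuffix_le

theorem IsLyndon.isLyndon_append_wordPow {a u : List X} (ha : IsLyndon a) (hu : u ≠ [])
    (hlt : u < a) (hsuf : ForallSuffix (a ≤ ·) u.tail) (j : ℕ) : IsLyndon (u ++ wordPow a j) := by
  refine isLyndon_iff.2 ⟨by simp [hu], ?_⟩
  rw [List.tail_append_of_ne_nil hu]
  exact (ha.forallSuffix_append_wordPow hsuf j).mono
    fun _ => (ha.append_wordPow_lt hu hlt j).trans_le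

theorem exists_isLyndon_suffix {w : List X} (hw : w ≠ []) :
    ∃ a, IsLyndon a ∧ a <:+ w ∧ ForallSuffix (a ≤ ·) w := by
  induction w with
  | nil => exact absurd rfl hw
  | cons x w ih =>
    rcases eq_or_ne w [] with rfl | hw
    · exact ⟨[x], isLyndon_singleton x, List.suffix_rfl, (isLyndon_singleton x).forallSuffix_le⟩
    · obtain ⟨a, ha, haw, hmin⟩ := ih hw
      rcases le_or_gt a (x :: w) with hle | hlt
      · exact ⟨a, ha, haw.trans (List.suffix_cons x w), .cons hle hmin⟩
      · have hxw : IsLyndon (x :: w) :=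
          isLyndon_iff.2 ⟨by simp, hmin.mono fun _ => hlt.trans_le⟩
        exact ⟨x :: w, hxw, List.suffix_rfl, hxw.forallSuffix_le⟩

theorem ForallSuffix.le_of_append {a w : List X} (h : ForallSuffix (a ≤ ·) (w ++ a)) :
    ForallSuffix (a ≤ ·) w := by
  intro s ⟨r, hr⟩ hs
  by_contra! hlt
  have hsa : a ≤ s ++ a := h (s ++ a) ⟨r, by rw [← hr, List.append_assoc]⟩ (by simp [hs])
  rcases prefix_or_forall_append_lt hlt with ⟨b, rfl⟩ | hlt'
  · have hb : b ≠ [] := by rintro rfl; simp at hlt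
    have hba : s ++ b ≤ b := h b ⟨w ++ s, by simp⟩ hb
    have hab : b ≤ s ++ b := by
      refine le_of_not_gt fun hlt => hsa.not_gt (List.append_left_lt hlt)
    exact hs (by simpa using hba.antisymm hab)
  · exact hsa.not_gt (by simpa using hlt' a [])

theorem exists_eq_append_wordPow {a : List X} (ha : a ≠ []) (w : List X)
    (hw : ForallSuffix (a ≤ ·) w) : ∃ v j, w = v ++ wordPow a j ∧ ForallSuffix (a < ·) v := by
  by_cases hsuf : a <:+ w
  · obtain ⟨w', rfl⟩ := hsuf
    have hlen : w'.length < (w' ++ a).length := by simpa using List.length_pos_iff.2 ha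
    obtain ⟨v, j, rfl, hv⟩ := exists_eq_append_wordPow ha w' hw.le_of_append
    exact ⟨v, j + 1, by rw [append_wordPow_succ], hv⟩
  · refine ⟨w, 0, by simp, fun s hs hs0 => lt_of_le_of_ne (hw s hs hs0) ?_⟩
    rintro rfl
    exact hsuf hs
termination_by w.length

theorem append_wordPow_inj {a u v : List X} (ha : a ≠ []) (hu : u ≠ []) (hv : v ≠ [])
    (hua : ForallSuffix (a < ·) u.tail) (hva : ForallSuffix (a < ·) v.tail) {i j : ℕ}
    (h : u ++ wordPow a i = v ++ wordPow a j) : u = v ∧ i = j := by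
  have not_suffix {u v : List X} (hu : u ≠ []) (hva : ForallSuffix (a < ·) v.tail) {i : ℕ} :
      v ≠ u ++ wordPow a (i + 1) := by
    rintro rfl
    refine (hva a ⟨u.tail ++ wordPow a i, ?_⟩ ha).false
    rw [List.tail_append_of_ne_nil hu, append_wordPow_succ]
  induction i generalizing j with
  | zero =>
    cases j with
    | zero => simpa using h
    | succ j => exact absurd (by simpa using h) (not_suffix hv hua)
  | succ i ih =>
    cases j with
    | zero => exact absurd (by simpa using h.symm) (not_suffix hu hva)
    | succ j =>
      rw [append_wordPow_succ, append_wordPow_succ] at h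
      exact (ih (List.append_cancel_right h)).imp_right (congrArg Nat.succ)

theorem length_le_of_isLyndon_suffix {a u δ : List X} (ha : a ≠ []) (hu : u ≠ [])
    (hua : ForallSuffix (a ≤ ·) u.tail) (hδ : IsLyndon δ) (h : δ <:+ (u ++ a).tail) :
    δ.length ≤ a.length := by
  rw [List.tail_append_of_ne_nil hu] at h
  by_contra! hlt
  obtain ⟨s, hs⟩ := List.suffix_of_suffix_length_le (List.suffix_append u.tail a) h hlt.le
  subst hs
  have hs : s ≠ [] := by rintro rfl; simp at hlt
  have hδa : s ++ a < a := hδ.forallSuffix_tail a ⟨s.tail, (List.tail_append_of_ne_nil hs).symm⟩ ha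
  have hsu : s <:+ u.tail := (List.suffix_append_inj_of_length_eq rfl).1 h |>.1
  exact ((hua s hsu hs).trans (le_append s a)).not_gt hδa

/-- The pairs `(α, t) ∈ L` are the factors `α ^ t` of the Chen–Fox–Lyndon factorization of `w`,
in decreasing order. -/
structure IsLyndonFactorization (L : List (List X × ℕ)) (w : List X) : Prop where
  isLyndon : ∀ p ∈ L, IsLyndon p.1
  one_le : ∀ p ∈ L, 1 ≤ p.2
  sortedGT : (L.map Prod.fst).SortedGT
  flatten : (L.map fun p => wordPow p.1 p.2).flatten = w

theorem IsLyndonFactorization.append_wordPow {L : List (List X × ℕ)} {v a : List X} {j : ℕ}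
    (hL : IsLyndonFactorization L v) (ha : IsLyndon a) (hj : 1 ≤ j) (haL : ∀ p ∈ L, a < p.1) :
    IsLyndonFactorization (L ++ [(a, j)]) (v ++ wordPow a j) where
  isLyndon := by
    simpa only [List.forall_mem_append, List.forall_mem_singleton] using ⟨hL.isLyndon, ha⟩
  one_le := by simpa only [List.forall_mem_append, List.forall_mem_singleton] using ⟨hL.one_le, hj⟩
  sortedGT := by
    have := hL.sortedGT
    rw [List.sortedGT_iff_pairwise] at this ⊢
    simpa [List.pairwise_append, this] using haL
  flatten := by simp [hL.flatten]

theorem exists_isLyndonFactorization (w : List X) :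
    ∃ L, IsLyndonFactorization L w ∧ ∀ b, ForallSuffix (b < ·) w → ∀ p ∈ L, b < p.1 := by
  rcases eq_or_ne w [] with rfl | hw
  · exact ⟨[], ⟨by simp, by simp, List.Pairwise.nil.sortedGT, rfl⟩, by simp⟩
  · obtain ⟨a, ha, haw, hmin⟩ := exists_isLyndon_suffix hw
    obtain ⟨v, j, rfl, hv⟩ := exists_eq_append_wordPow ha.1 w hmin
    have hj : 1 ≤ j := by
      refine Nat.one_le_iff_ne_zero.2 ?_
      rintro rfl
      exact (hv a (by simpa using haw) ha.1).false
    have : v.length < (v ++ wordPow a j).length := by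
      simpa [length_wordPow] using ⟨hj, List.length_pos_iff.2 ha.1⟩
    obtain ⟨L, hL, hLv⟩ := exists_isLyndonFactorization v
    refine ⟨L ++ [(a, j)], hL.append_wordPow ha hj (hLv a hv), fun b hb p hp => ?_⟩
    have hba : b < a := hb a haw ha.1
    rcases List.mem_append.1 hp with hp | hp
    · exact hba.trans (hLv a hv p hp)
    · rwa [List.mem_singleton.1 hp]
termination_by w.length

end OrderedWords

open scoped Nat

section Basis

variable {X A : Type*} [LinearOrder X] [Ring A]

/-- The family `E` satisfies the defining recursion `E α = [E α_L, E α_R]` of the Lyndon–Shirshov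
basis, `α_R` being the longest proper suffix of `α` that is a Lyndon word. The values of `E` on
letters are not prescribed. -/
def IsLyndonShirshov (E : List X → A) : Prop :=
  ∀ u v : List X, IsLyndon (u ++ v) → u ≠ [] → IsLyndon v →
    (∀ δ β : List X, u ++ v = β ++ δ → β ≠ [] → IsLyndon δ → δ.length ≤ v.length) →
    E (u ++ v) = E u * E v - E v * E u

theorem IsLyndonShirshov.append_wordPow_succ {E : List X → A} (hE : IsLyndonShirshov E)
    {a u : List X} (ha : IsLyndon a) (hu : u ≠ []) (hlt : u < a)
    (hua : ForallSuffix (a ≤ ·) u.tail) (j : ℕ) :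
    E (u ++ wordPow a (j + 1)) =
      E (u ++ wordPow a j) * E a - E a * E (u ++ wordPow a j) := by
  have hne : u ++ wordPow a j ≠ [] := by simp [hu]
  have hsuf : ForallSuffix (a ≤ ·) (u ++ wordPow a j).tail := by
    rw [List.tail_append_of_ne_nil hu]
    exact ha.forallSuffix_append_wordPow hua j
  have hlyn := ha.isLyndon_append_wordPow hu hlt hua (j + 1)
  rw [_root_.append_wordPow_succ] at hlyn ⊢
  refine hE _ _ hlyn hne ha fun δ β h hβ hδ => ?_
  refine length_le_of_isLyndon_suffix ha.1 hne hsuf hδ ⟨β.tail, ?_⟩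
  rw [h, List.tail_append_of_ne_nil hβ]

end Basis

section Coefficients

variable {X k : Type*} [LinearOrder X] [Field k]

/-- The family `C` satisfies the defining recursion of the Lyndon–Shirshov coefficients. -/
structure IsLyndonCoeff (C : List X → k) : Prop where
  singleton : ∀ x, C [x] = 1
  cons : ∀ x w L, IsLyndon (x :: w) → w ≠ [] → IsLyndonFactorization L w →
    C (x :: w) =
      (w.length ! : k) / (L.map fun p => (p.1.length ! : k) ^ p.2 * (p.2 ! : k)).prod *
        (L.map fun p => C p.1 ^ p.2).prod

/-- The coefficient `C α / |α|!` of `E α` in the exponent of the factor attached to `α`. -/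
def normCoeff (C : List X → k) (u : List X) : k := C u / (u.length ! : k)

/-- The weight `|α| * (C α / |α|!) = C α / (|α| - 1)!`, which is multiplicative along the
Chen–Fox–Lyndon factorization of the tail of `α`. -/
def lyndonWeight (C : List X → k) (u : List X) : k := u.length * normCoeff C u

theorem IsLyndonCoeff.lyndonWeight_singleton {C : List X → k} (hC : IsLyndonCoeff C) (x : X) :
    lyndonWeight C [x] = 1 := by
  simp [lyndonWeight, normCoeff, hC.singleton]

theorem IsLyndonFactorization.eq_nil {L : List (List X × ℕ)} (hL : IsLyndonFactorization L []) :
    L = [] := by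
  refine List.eq_nil_iff_forall_not_mem.2 fun p hp => ?_
  have hnil := List.flatten_eq_nil_iff.1 hL.flatten _ (List.mem_map_of_mem hp)
  have hlen : p.2 * p.1.length = 0 := by rw [← length_wordPow, hnil, List.length_nil]
  have hpos := hL.one_le p hp
  rcases Nat.mul_eq_zero.1 hlen with h | h
  · omega
  · exact (hL.isLyndon p hp).1 (List.length_eq_zero_iff.1 h)

variable [CharZero k]

theorem IsLyndonCoeff.lyndonWeight_cons {C : List X → k} (hC : IsLyndonCoeff C) {x : X}
    {w : List X} (hw : IsLyndon (x :: w)) {L : List (List X × ℕ)}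
    (hL : IsLyndonFactorization L w) :
    lyndonWeight C (x :: w) = (L.map fun p => normCoeff C p.1 ^ p.2 / (p.2 ! : k)).prod := by
  rcases eq_or_ne w [] with rfl | hw0
  · rw [hC.lyndonWeight_singleton, hL.eq_nil, List.map_nil, List.prod_nil]
  · set D : List X × ℕ → k := fun p => (p.1.length ! : k) ^ p.2 * (p.2 ! : k) with hD
    have hterm (p : List X × ℕ) : normCoeff C p.1 ^ p.2 / (p.2 ! : k) = C p.1 ^ p.2 * (D p)⁻¹ := by
      rw [normCoeff, div_pow, div_div, div_eq_mul_inv]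
    have hinv : (L.map fun p => (D p)⁻¹).prod = (L.map D).prod⁻¹ := by
      rw [List.prod_inv, List.map_map]
      rfl
    have hfact : (w.length ! : k) ≠ 0 := mod_cast w.length.factorial_ne_zero
    have hsucc : (w.length + 1 : k) ≠ 0 := mod_cast w.length.succ_ne_zero
    simp only [hterm, List.prod_map_mul, hinv]
    rw [lyndonWeight, normCoeff, hC.cons x w L hw hw0 hL, ← hD, List.length_cons,
      Nat.factorial_succ]
    push_cast
    field_simp

theorem IsLyndonCoeff.lyndonWeight_append_wordPow {C : List X → k} (hC : IsLyndonCoeff C)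
    {a u : List X} (ha : IsLyndon a) (hu : u ≠ []) (hlt : u < a)
    (hua : ForallSuffix (a < ·) u.tail) (j : ℕ) :
    lyndonWeight C (u ++ wordPow a j) = lyndonWeight C u * (normCoeff C a ^ j / (j ! : k)) := by
  obtain ⟨x, v, rfl⟩ := List.exists_cons_of_ne_nil hu
  have hlyn (j : ℕ) : IsLyndon (x :: (v ++ wordPow a j)) :=
    ha.isLyndon_append_wordPow hu hlt (hua.mono fun _ => le_of_lt) j
  obtain ⟨L, hL, haL⟩ := exists_isLyndonFactorization v
  have hxv : IsLyndon (x :: v) := by simpa using hlyn 0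
  rcases j.eq_zero_or_pos with rfl | hj
  · simp
  · rw [List.cons_append, hC.lyndonWeight_cons (hlyn j) (hL.append_wordPow ha hj (haL a hua)),
      hC.lyndonWeight_cons hxv hL]
    simp

end Coefficients

section Conjugation

variable {A : Type*} [Ring A] [Module ℚ A]

theorem mul_exp_eq_exp_mul_sum {Y : A} (hY : IsNilpotent Y) {Z : ℕ → A}
    (hZ : ∀ j, Z j * Y - Y * Z j = Z (j + 1)) {n : ℕ} (hn : Z n = 0) :
    Z 0 * IsNilpotent.exp Y = IsNilpotent.exp Y * ∑ j ∈ Finset.range n, (j ! : ℚ)⁻¹ • Z j := by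
  set l : Module.End ℤ A := LinearMap.mulLeft ℤ Y with hl
  set r : Module.End ℤ A := LinearMap.mulRight ℤ Y with hr
  have exp_apply {f : Module.End ℤ A} (hf : IsNilpotent f) {m : ℕ} {z : A}
      (h : (f ^ m) z = 0) :
      IsNilpotent.exp f z = ∑ j ∈ Finset.range m, (j ! : ℚ)⁻¹ • (f ^ j) z :=
    IsNilpotent.exp_smul_eq_sum (a := f) (m := z) h hf
  have hlr : Commute l r := LinearMap.commute_mulLeft_right Y Y
  have hl_nil : IsNilpotent l := (LinearMap.isNilpotent_mulLeft_iff ℤ Y).2 hY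
  have hr_nil : IsNilpotent r := (LinearMap.isNilpotent_mulRight_iff ℤ Y).2 hY
  have hcomm : Commute l (r - l) := hlr.sub_right (Commute.refl l)
  have hd_nil : IsNilpotent (r - l) := hlr.symm.isNilpotent_sub hr_nil hl_nil
  have hd (j : ℕ) : ((r - l) ^ j) (Z 0) = Z j := by
    induction j with
    | zero => rfl
    | succ j ih => rw [pow_succ', Module.End.mul_apply, ih, ← hZ j]; rfl
  obtain ⟨m, hm⟩ := hY
  have exp_l (z : A) : IsNilpotent.exp l z = IsNilpotent.exp Y * z := by
    rw [exp_apply hl_nil (m := m) (by simp [hl, LinearMap.pow_mulLeft, hm]),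
      IsNilpotent.exp_eq_sum hm, Finset.sum_mul]
    simp [hl, LinearMap.pow_mulLeft, smul_mul_assoc]
  have exp_r (z : A) : IsNilpotent.exp r z = z * IsNilpotent.exp Y := by
    rw [exp_apply hr_nil (m := m) (by simp [hr, LinearMap.pow_mulRight, hm]),
      IsNilpotent.exp_eq_sum hm, Finset.mul_sum]
    simp [hr, LinearMap.pow_mulRight, mul_smul_comm]
  calc Z 0 * IsNilpotent.exp Y = IsNilpotent.exp (l + (r - l)) (Z 0) := by
        rw [add_sub_cancel, exp_r]
    _ = IsNilpotent.exp Y * IsNilpotent.exp (r - l) (Z 0) := by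
        rw [IsNilpotent.exp_add_of_commute hcomm hl_nil hd_nil, Module.End.mul_apply, exp_l]
    _ = IsNilpotent.exp Y * ∑ j ∈ Finset.range n, (j ! : ℚ)⁻¹ • Z j := by
        rw [exp_apply hd_nil (m := n) (by rw [hd, hn])]
        simp only [hd]

end Conjugation

section SuffixMinimal

variable {X : Type*} [LinearOrder X]

/-- The words of `S` none of whose proper suffixes belongs to `S`. -/
def suffixMinimal (S : Finset (List X)) : Finset (List X) :=
  {u ∈ S | ∀ s ∈ S, ¬ s <:+ u.tail}

theorem mem_suffixMinimal {N : ℕ} {S : Finset (List X)} {P : List X → Prop}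
    (hP : ∀ u v, u ≤ v → P v → P u) (hS : ∀ w, w ∈ S ↔ IsLyndon w ∧ w.length ≤ N ∧ P w)
    {u : List X} :
    u ∈ suffixMinimal S ↔ u ≠ [] ∧ u.length ≤ N ∧ P u ∧ ForallSuffix (fun s => ¬ P s) u.tail := by
  rw [suffixMinimal, Finset.mem_filter]
  constructor
  · rintro ⟨hu, hmin⟩
    obtain ⟨hu, huN, hPu⟩ := (hS u).1 hu
    refine ⟨hu.1, huN, hPu, fun s hs hs0 hPs => ?_⟩
    obtain ⟨l, hl, hls, hle⟩ := exists_isLyndon_suffix hs0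
    have hlu : l <:+ u.tail := hls.trans hs
    have hlN : l.length ≤ N := (hlu.trans (List.tail_suffix u)).length_le.trans huN
    exact hmin l ((hS l).2 ⟨hl, hlN, hP l s (hle s List.suffix_rfl hs0) hPs⟩) hlu
  · rintro ⟨hu0, huN, hPu, hsuf⟩
    have hlyn : IsLyndon u :=
      isLyndon_iff.2 ⟨hu0, hsuf.mono fun s hs => not_le.1 fun hle => hs (hP s u hle hPu)⟩
    refine ⟨(hS u).2 ⟨hlyn, huN, hPu⟩, fun s hs hsu => ?_⟩
    obtain ⟨hs, -, hPs⟩ := (hS s).1 hs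
    exact hsuf s hsu hs.1 hPs

/-- `S` is a lower set in the set of Lyndon words of length at most `N`. -/
def IsLyndonLower (N : ℕ) (S : Finset (List X)) : Prop :=
  ∀ v ∈ S, IsLyndon v ∧ v.length ≤ N ∧ ∀ u, IsLyndon u → u.length ≤ N → u ≤ v → u ∈ S

variable {N : ℕ} {S : Finset (List X)} {a : List X}

theorem IsLyndonLower.isLyndon (h : IsLyndonLower N (insert a S)) : IsLyndon a :=
  (h a (Finset.mem_insert_self a S)).1

theorem IsLyndonLower.length_le (h : IsLyndonLower N (insert a S)) : a.length ≤ N :=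
  (h a (Finset.mem_insert_self a S)).2.1

theorem IsLyndonLower.mem_insert_iff (h : IsLyndonLower N (insert a S)) (ha : ∀ s ∈ S, s < a)
    {w : List X} : w ∈ insert a S ↔ IsLyndon w ∧ w.length ≤ N ∧ w ≤ a := by
  refine ⟨fun hw => ⟨(h w hw).1, (h w hw).2.1, ?_⟩, fun ⟨hw, hwN, hwa⟩ =>
    (h a (Finset.mem_insert_self a S)).2.2 w hw hwN hwa⟩
  exact (Finset.mem_insert.1 hw).elim le_of_eq fun hw => (ha w hw).le

theorem IsLyndonLower.mem_iff (h : IsLyndonLower N (insert a S)) (ha : ∀ s ∈ S, s < a)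
    {w : List X} : w ∈ S ↔ IsLyndon w ∧ w.length ≤ N ∧ w < a := by
  constructor
  · intro hw
    obtain ⟨hlyn, hwN, -⟩ := h w (Finset.mem_insert_of_mem hw)
    exact ⟨hlyn, hwN, ha w hw⟩
  · rintro ⟨hw, hwN, hwa⟩
    exact Finset.mem_of_mem_insert_of_ne ((h.mem_insert_iff ha).2 ⟨hw, hwN, hwa.le⟩) hwa.ne

theorem IsLyndonLower.of_insert (h : IsLyndonLower N (insert a S)) (ha : ∀ s ∈ S, s < a) :
    IsLyndonLower N S := by
  intro v hv
  obtain ⟨hlyn, hvN, hva⟩ := (h.mem_iff ha).1 hv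
  exact ⟨hlyn, hvN, fun u hu huN huv => (h.mem_iff ha).2 ⟨hu, huN, huv.trans_lt hva⟩⟩

theorem IsLyndonLower.mem_suffixMinimal_insert (h : IsLyndonLower N (insert a S))
    (ha : ∀ s ∈ S, s < a) {u : List X} :
    u ∈ suffixMinimal (insert a S) ↔
      u ≠ [] ∧ u.length ≤ N ∧ u ≤ a ∧ ForallSuffix (a < ·) u.tail := by
  simpa only [not_le] using
    mem_suffixMinimal (P := (· ≤ a)) (fun _ _ => le_trans) fun _ => h.mem_insert_iff ha

theorem IsLyndonLower.mem_suffixMinimal (h : IsLyndonLower N (insert a S))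
    (ha : ∀ s ∈ S, s < a) {u : List X} :
    u ∈ suffixMinimal S ↔ u ≠ [] ∧ u.length ≤ N ∧ u < a ∧ ForallSuffix (a ≤ ·) u.tail := by
  simpa only [not_lt] using
    _root_.mem_suffixMinimal (P := (· < a)) (fun _ _ => lt_of_le_of_lt) fun _ => h.mem_iff ha

theorem IsLyndonLower.self_mem_suffixMinimal (h : IsLyndonLower N (insert a S))
    (ha : ∀ s ∈ S, s < a) : a ∈ suffixMinimal (insert a S) :=
  (h.mem_suffixMinimal_insert ha).2
    ⟨h.isLyndon.1, h.length_le, le_rfl, h.isLyndon.forallSuffix_tail⟩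

theorem IsLyndonLower.mem_erase_suffixMinimal_insert (h : IsLyndonLower N (insert a S))
    (ha : ∀ s ∈ S, s < a) {u : List X} :
    u ∈ (suffixMinimal (insert a S)).erase a ↔
      u ≠ [] ∧ u.length ≤ N ∧ u < a ∧ ForallSuffix (a < ·) u.tail := by
  rw [Finset.mem_erase, h.mem_suffixMinimal_insert ha, lt_iff_le_and_ne]
  tauto

theorem IsLyndonLower.append_wordPow_mem_suffixMinimal (h : IsLyndonLower N (insert a S))
    (ha : ∀ s ∈ S, s < a) {u : List X} (hu : u ∈ (suffixMinimal (insert a S)).erase a) {j : ℕ}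
    (hj : (u ++ wordPow a j).length ≤ N) : u ++ wordPow a j ∈ suffixMinimal S := by
  obtain ⟨hu0, -, hua, hsuf⟩ := (h.mem_erase_suffixMinimal_insert ha).1 hu
  refine (h.mem_suffixMinimal ha).2
    ⟨by simp [hu0], hj, h.isLyndon.append_wordPow_lt hu0 hua j, ?_⟩
  rw [List.tail_append_of_ne_nil hu0]
  exact h.isLyndon.forallSuffix_append_wordPow (hsuf.mono fun _ => le_of_lt) j

theorem IsLyndonLower.exists_append_wordPow_eq (h : IsLyndonLower N (insert a S))
    (ha : ∀ s ∈ S, s < a) {w : List X} (hw : w ∈ suffixMinimal S) :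
    ∃ u ∈ (suffixMinimal (insert a S)).erase a, ∃ j ≤ N, u ++ wordPow a j = w := by
  obtain ⟨hw0, hwN, hwa, hsuf⟩ := (h.mem_suffixMinimal ha).1 hw
  obtain ⟨x, w, rfl⟩ := List.exists_cons_of_ne_nil hw0
  obtain ⟨v, j, rfl, hv⟩ := exists_eq_append_wordPow h.isLyndon.1 w hsuf
  have hlen : v.length + j * a.length + 1 ≤ N := by simpa [length_wordPow] using hwN
  have hj : j ≤ j * a.length :=
    Nat.le_mul_of_pos_right j (List.length_pos_iff.2 h.isLyndon.1)
  refine ⟨x :: v, (h.mem_erase_suffixMinimal_insert ha).2 ⟨by simp, ?_, ?_, hv⟩, j, ?_, rfl⟩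
  · rw [List.length_cons]
    omega
  · exact (le_append (x :: v) (wordPow a j)).trans_lt hwa
  · omega

theorem IsLyndonLower.sum_suffixMinimal_append_wordPow {M : Type*} [AddCommMonoid M]
    (h : IsLyndonLower N (insert a S)) (ha : ∀ s ∈ S, s < a) {f : List X → M}
    (hf : ∀ w, N < w.length → f w = 0) :
    ∑ u ∈ (suffixMinimal (insert a S)).erase a,
        ∑ j ∈ Finset.range (N + 1), f (u ++ wordPow a j) =
      ∑ w ∈ suffixMinimal S, f w := by
  set F := (suffixMinimal (insert a S)).erase a
  set g : List X × ℕ → List X := fun p => p.1 ++ wordPow a p.2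
  have hinj : Set.InjOn g (F ×ˢ Finset.range (N + 1) : Finset (List X × ℕ)) := by
    rintro ⟨u, i⟩ hu ⟨v, j⟩ hv huv
    obtain ⟨hu0, -, -, hua⟩ :=
      (h.mem_erase_suffixMinimal_insert ha).1 (Finset.mem_product.1 hu).1
    obtain ⟨hv0, -, -, hva⟩ :=
      (h.mem_erase_suffixMinimal_insert ha).1 (Finset.mem_product.1 hv).1
    exact Prod.ext_iff.2 (append_wordPow_inj h.isLyndon.1 hu0 hv0 hua hva huv)
  rw [← Finset.sum_product', ← Finset.sum_image (f := f) (g := g) hinj]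
  refine (Finset.sum_subset (fun w hw => ?_) fun w hw hwS => hf w (not_le.1 fun hwN => hwS ?_)).symm
  · obtain ⟨u, hu, j, hj, rfl⟩ := h.exists_append_wordPow_eq ha hw
    exact Finset.mem_image_of_mem g (a := (u, j))
      (Finset.mem_product.2 ⟨hu, Finset.mem_range.2 (by omega)⟩)
  · obtain ⟨⟨u, j⟩, hp, rfl⟩ := Finset.mem_image.1 hw
    exact h.append_wordPow_mem_suffixMinimal ha (Finset.mem_product.1 hp).1 hwN

end SuffixMinimal

section Factorization

variable {X k A : Type*} [LinearOrder X] [Field k] [Ring A] [Algebra k A]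

/-- A Lyndon–Shirshov family in which words longer than `N` vanish, together with an element `H`
whose commutator with `E w` multiplies `E w` by the length of `w`. -/
structure IsTruncatedLyndonShirshov (N : ℕ) (H : A) (E : List X → A) : Prop where
  isLyndonShirshov : IsLyndonShirshov E
  eq_zero : ∀ w, N < w.length → E w = 0
  pow_eq_zero : ∀ w, w ≠ [] → E w ^ (N + 1) = 0
  commutator : ∀ w, H * E w - E w * H = w.length • E w

/-- The first-order term `∑ (|u| C u / |u|!) E u`, over the words `u ∈ S` without proper suffix in
`S`, that is left once the factors of the words outside `S` have been split off. -/
def leadingSum (C : List X → k) (E : List X → A) (S : Finset (List X)) : A :=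
  ∑ u ∈ suffixMinimal S, lyndonWeight C u • E u

variable {C : List X → k} {E : List X → A} {H : A} {N : ℕ} {S : Finset (List X)} {a : List X}

theorem IsTruncatedLyndonShirshov.isNilpotent_smul (hE : IsTruncatedLyndonShirshov N H E)
    {w : List X} (hw : w ≠ []) (c : k) : IsNilpotent (c • E w) :=
  ⟨N + 1, by rw [smul_pow, hE.pow_eq_zero w hw, smul_zero]⟩

variable [Module ℚ A]

/-- The product of the exponentials of `(C α / |α|!) E α` over `α ∈ S` in decreasing order. -/
noncomputable def lyndonExpProd (C : List X → k) (E : List X → A) (S : Finset (List X)) : A :=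
  ((S.sort (· ≥ ·)).map fun a => IsNilpotent.exp (normCoeff C a • E a)).prod

theorem IsTruncatedLyndonShirshov.grading_sub_mul_exp (hE : IsTruncatedLyndonShirshov N H E)
    {w : List X} (hw : w ≠ []) (c : k) :
    (H - w.length • (c • E w)) * IsNilpotent.exp (c • E w) = IsNilpotent.exp (c • E w) * H := by
  set Y := c • E w with hY
  have hHY : H * Y - Y * H = w.length • Y := by
    rw [hY, mul_smul_comm, smul_mul_assoc, ← smul_sub, hE.commutator, smul_comm]
  let Z : ℕ → A
    | 0 => H - w.length • Y
    | 1 => w.length • Y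
    | _ + 2 => 0
  have hZ (j : ℕ) : Z j * Y - Y * Z j = Z (j + 1) := by
    match j with
    | 0 =>
      simp only [Z, sub_mul, mul_sub, smul_mul_assoc, mul_smul_comm, zero_add,
        sub_sub_sub_cancel_right, hHY]
    | 1 => simp only [Z, smul_mul_assoc, mul_smul_comm, sub_self]
    | _ + 2 => simp [Z]
  have h := mul_exp_eq_exp_mul_sum (hE.isNilpotent_smul hw c) hZ (n := 2) rfl
  simpa [Z, Finset.sum_range_succ] using h

theorem IsTruncatedLyndonShirshov.mul_exp [CharZero k] (hE : IsTruncatedLyndonShirshov N H E)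
    {a u : List X} (ha : IsLyndon a) (hu : u ≠ []) (hlt : u < a)
    (hua : ForallSuffix (a ≤ ·) u.tail) (c : k) :
    E u * IsNilpotent.exp (c • E a) =
      IsNilpotent.exp (c • E a) *
        ∑ j ∈ Finset.range (N + 1), (c ^ j / (j ! : k)) • E (u ++ wordPow a j) := by
  have hlen : N < (u ++ wordPow a (N + 1)).length := by
    have : N + 1 ≤ (N + 1) * a.length :=
      Nat.le_mul_of_pos_right _ (List.length_pos_iff.2 ha.1)
    rw [List.length_append, length_wordPow]
    omega
  have h := mul_exp_eq_exp_mul_sum (hE.isNilpotent_smul ha.1 c)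
    (Z := fun j => c ^ j • E (u ++ wordPow a j)) (n := N + 1)
    (fun j => by
      rw [hE.isLyndonShirshov.append_wordPow_succ ha hu hlt hua, smul_mul_smul_comm,
        smul_mul_smul_comm, ← pow_succ, ← pow_succ', smul_sub])
    (by simp only [hE.eq_zero _ hlen, smul_zero])
  simpa [← Rat.cast_smul_eq_qsmul k, smul_smul, div_eq_inv_mul] using h

theorem leadingSum_insert_mul_exp [CharZero k] (hC : IsLyndonCoeff C)
    (hE : IsTruncatedLyndonShirshov N H E) (hS : IsLyndonLower N (insert a S))
    (ha : ∀ s ∈ S, s < a) :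
    (leadingSum C E (insert a S) - a.length • (normCoeff C a • E a)) *
        IsNilpotent.exp (normCoeff C a • E a) =
      IsNilpotent.exp (normCoeff C a • E a) * leadingSum C E S := by
  have hsplit : leadingSum C E (insert a S) - a.length • (normCoeff C a • E a) =
      ∑ u ∈ (suffixMinimal (insert a S)).erase a, lyndonWeight C u • E u := by
    rw [leadingSum, ← Finset.add_sum_erase _ _ (hS.self_mem_suffixMinimal ha), lyndonWeight,
      mul_smul, Nat.cast_smul_eq_nsmul, add_sub_cancel_left]
  have hzero (w : List X) (hw : N < w.length) : lyndonWeight C w • E w = 0 := by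
    rw [hE.eq_zero w hw, smul_zero]
  rw [hsplit, leadingSum, ← hS.sum_suffixMinimal_append_wordPow ha hzero, Finset.sum_mul,
    Finset.mul_sum]
  refine Finset.sum_congr rfl fun u hu => ?_
  obtain ⟨hu0, -, hua, hsuf⟩ := (hS.mem_erase_suffixMinimal_insert ha).1 hu
  rw [smul_mul_assoc, hE.mul_exp hS.isLyndon hu0 hua (hsuf.mono fun _ => le_of_lt),
    ← mul_smul_comm, Finset.smul_sum]
  simp only [hC.lyndonWeight_append_wordPow hS.isLyndon hu0 hua hsuf, smul_smul]

theorem sub_leadingSum_insert_mul_exp [CharZero k] (hC : IsLyndonCoeff C)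
    (hE : IsTruncatedLyndonShirshov N H E) (hS : IsLyndonLower N (insert a S))
    (ha : ∀ s ∈ S, s < a) :
    (H - leadingSum C E (insert a S)) * IsNilpotent.exp (normCoeff C a • E a) =
      IsNilpotent.exp (normCoeff C a • E a) * (H - leadingSum C E S) := by
  rw [mul_sub, ← leadingSum_insert_mul_exp hC hE hS ha, ← hE.grading_sub_mul_exp hS.isLyndon.1,
    ← sub_mul, sub_sub_sub_cancel_right]

theorem sub_leadingSum_mul_lyndonExpProd [CharZero k] (hC : IsLyndonCoeff C)
    (hE : IsTruncatedLyndonShirshov N H E) {S T : Finset (List X)}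
    (hST : IsLyndonLower N (T ∪ S)) (hlt : ∀ s ∈ S, ∀ t ∈ T, s < t) :
    (H - leadingSum C E (T ∪ S)) * lyndonExpProd C E T =
      lyndonExpProd C E T * (H - leadingSum C E S) := by
  induction T using Finset.induction_on_max with
  | empty => simp [lyndonExpProd]
  | insert a T hmax ih =>
    rw [Finset.insert_union] at hST ⊢
    have ha : ∀ s ∈ T ∪ S, s < a := fun s hs => (Finset.mem_union.1 hs).elim (hmax s) fun hs =>
      hlt s hs a (Finset.mem_insert_self a T)
    have hprod : lyndonExpProd C E (insert a T) =
        IsNilpotent.exp (normCoeff C a • E a) * lyndonExpProd C E T := by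
      rw [lyndonExpProd, Finset.sort_insert (r := (· ≥ ·)) (fun b hb => (hmax b hb).le)
        fun h => (hmax a h).false, List.map_cons, List.prod_cons, lyndonExpProd]
    rw [hprod, ← mul_assoc, sub_leadingSum_insert_mul_exp hC hE hST ha, mul_assoc,
      ih (hST.of_insert ha) fun s hs t ht => hlt s hs t (Finset.mem_insert_of_mem ht), mul_assoc]

end Factorization

section LyndonWords

variable {X : Type*} [LinearOrder X] [Fintype X] {N : ℕ} {w : List X}

variable (X) in
/-- The Lyndon words of length at most `N` over a finite alphabet. -/
noncomputable def lyndonWords (N : ℕ) : Finset (List X) :=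
  open scoped Classical in {w ∈ (List.finite_length_le X N).toFinset | IsLyndon w}

theorem mem_lyndonWords : w ∈ lyndonWords X N ↔ IsLyndon w ∧ w.length ≤ N := by
  simp [lyndonWords, and_comm]

theorem isLyndonLower_lyndonWords : IsLyndonLower N (lyndonWords X N) := fun _ hv =>
  ⟨(mem_lyndonWords.1 hv).1, (mem_lyndonWords.1 hv).2, fun _ hu huN _ =>
    mem_lyndonWords.2 ⟨hu, huN⟩⟩

theorem suffixMinimal_lyndonWords (hN : 0 < N) :
    suffixMinimal (lyndonWords X N) = Finset.univ.image fun x => [x] := by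
  ext u
  rw [mem_suffixMinimal (N := N) (P := fun _ => True) (fun _ _ _ => id) (by simp [mem_lyndonWords])]
  constructor
  · rintro ⟨hu, -, -, hsuf⟩
    obtain ⟨x, v, rfl⟩ := List.exists_cons_of_ne_nil hu
    have hv : v = [] := by
      by_contra hv
      exact hsuf v List.suffix_rfl hv trivial
    simp [hv]
  · intro hu
    obtain ⟨x, -, rfl⟩ := Finset.mem_image.1 hu
    exact ⟨by simp, hN, trivial, .nil⟩

theorem IsTruncatedLyndonShirshov.sub_sum_mul_lyndonExpProd {k A : Type*} [OrderBot X] [Field k]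
    [CharZero k] [Ring A] [Algebra k A] [Module ℚ A] {C : List X → k} {E : List X → A} {H : A}
    (hE : IsTruncatedLyndonShirshov N H E) (hC : IsLyndonCoeff C) (hN : 0 < N) :
    (H - ∑ x, E [x]) * lyndonExpProd C E ((lyndonWords X N).erase [⊥]) =
      lyndonExpProd C E ((lyndonWords X N).erase [⊥]) * (H - E [⊥]) := by
  have hbot : [⊥] ∈ lyndonWords X N := mem_lyndonWords.2 ⟨isLyndon_singleton ⊥, hN⟩
  have hunion : (lyndonWords X N).erase [⊥] ∪ {[⊥]} = lyndonWords X N := by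
    rw [Finset.union_comm, ← Finset.insert_eq, Finset.insert_erase hbot]
  have hsum : leadingSum C E (lyndonWords X N) = ∑ x, E [x] := by
    rw [leadingSum, suffixMinimal_lyndonWords hN,
      Finset.sum_image List.singleton_injective.injOn]
    simp only [hC.lyndonWeight_singleton, one_smul]
  have hsum_bot : leadingSum C E {[⊥]} = E [⊥] := by
    rw [leadingSum, suffixMinimal, Finset.filter_singleton, if_pos (by simp),
      Finset.sum_singleton, hC.lyndonWeight_singleton, one_smul]
  have h := sub_leadingSum_mul_lyndonExpProd hC hE (S := {[⊥]})
    (T := (lyndonWords X N).erase [⊥]) (by rw [hunion]; exact isLyndonLower_lyndonWords) ?_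
  · rwa [hunion, hsum, hsum_bot] at h
  · intro s hs t ht
    obtain ⟨hne, ht⟩ := Finset.mem_erase.1 ht
    rw [Finset.mem_singleton.1 hs]
    exact (singleton_bot_le (mem_lyndonWords.1 ht).1.1).lt_of_ne' hne

end LyndonWords

section Expansion

variable {α : Type*}

/-- Adds the factor `a ^ t` to a list of powers, omitting it when `t = 0`. -/
def consPow (a : α) (p : ℕ × List (α × ℕ)) : List (α × ℕ) :=
  if p.1 = 0 then p.2 else (a, p.1) :: p.2

theorem consPow_injOn (a : α) : Set.InjOn (consPow a) {p | a ∉ p.2.map Prod.fst} := by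
  rintro ⟨s, L⟩ hL ⟨t, M⟩ hM h
  simp only [consPow] at h
  split_ifs at h with hs ht ht
  · exact Prod.ext (hs.trans ht.symm) h
  · exact absurd (by simp [h]) hL
  · exact absurd (by simp [← h]) hM
  · simpa [Prod.ext_iff] using h

theorem prod_consPow {M : Type*} [Monoid M] {f : α → ℕ → M} (hf : ∀ a, f a 0 = 1) (a : α)
    (p : ℕ × List (α × ℕ)) :
    ((consPow a p).map fun q => f q.1 q.2).prod =
      f a p.1 * (p.2.map fun q => f q.1 q.2).prod := by
  rw [consPow]
  split_ifs with hp <;> simp [hp, hf]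

open scoped Classical in
/-- The lists of powers, with exponents between `1` and `N`, whose bases form a sublist of the
given list. -/
noncomputable def powLists (N : ℕ) : List α → Finset (List (α × ℕ))
  | [] => {[]}
  | a :: S => (Finset.range (N + 1) ×ˢ powLists N S).image (consPow a)

theorem mem_powLists {N : ℕ} {S : List α} {L : List (α × ℕ)} :
    L ∈ powLists N S ↔ (L.map Prod.fst).Sublist S ∧ ∀ p ∈ L, 1 ≤ p.2 ∧ p.2 ≤ N := by
  induction S generalizing L with
  | nil => simp +contextual [powLists]
  | cons a S ih =>
    simp only [powLists, Finset.mem_image, Finset.mem_product, Finset.mem_range, Prod.exists, ih]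
    constructor
    · rintro ⟨t, L, ⟨ht, hL, hLN⟩, rfl⟩
      rw [consPow]
      split_ifs with h0
      · exact ⟨hL.cons a, hLN⟩
      · exact ⟨hL.cons_cons a, List.forall_mem_cons.2
          ⟨⟨Nat.one_le_iff_ne_zero.2 h0, Nat.lt_succ_iff.1 ht⟩, hLN⟩⟩
    · rintro ⟨hL, hLN⟩
      rcases List.sublist_cons_iff.1 hL with hL | ⟨r, hr, hrS⟩
      · exact ⟨0, L, ⟨by simp, hL, hLN⟩, by simp [consPow]⟩
      · obtain ⟨⟨b, t⟩, L, rfl, rfl, rfl⟩ := List.map_eq_cons_iff.1 hr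
        obtain ⟨⟨ht, htN⟩, hLN⟩ := List.forall_mem_cons.1 hLN
        exact ⟨t, L, ⟨Nat.lt_succ_iff.2 htN, hrS, hLN⟩,
          by simp [consPow, Nat.one_le_iff_ne_zero.1 ht]⟩

theorem sum_powLists_cons {M : Type*} [AddCommMonoid M] (N : ℕ) {a : α} {S : List α} (ha : a ∉ S)
    (g : List (α × ℕ) → M) :
    ∑ L ∈ powLists N (a :: S), g L =
      ∑ p ∈ Finset.range (N + 1) ×ˢ powLists N S, g (consPow a p) := by
  classical rw [powLists, Finset.sum_image ((consPow_injOn a).mono ?_)]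
  intro p hp hap
  exact ha ((mem_powLists.1 (Finset.mem_product.1 hp).2).1.subset hap)

theorem prod_map_sum_range {R : Type*} [Semiring R] {N : ℕ} {f : α → ℕ → R}
    (hf : ∀ a, f a 0 = 1) {S : List α} (hS : S.Nodup) :
    (S.map fun a => ∑ t ∈ Finset.range (N + 1), f a t).prod =
      ∑ L ∈ powLists N S, (L.map fun p => f p.1 p.2).prod := by
  induction S with
  | nil => simp [powLists]
  | cons a S ih =>
    obtain ⟨ha, hS⟩ := List.nodup_cons.1 hS
    simp only [sum_powLists_cons N ha, prod_consPow hf, List.map_cons, List.prod_cons, ih hS,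
      Finset.sum_mul_sum, Finset.sum_product]

theorem mem_powLists_sort [LinearOrder α] {N : ℕ} {S : Finset α} {L : List (α × ℕ)} :
    L ∈ powLists N (S.sort (· ≥ ·)) ↔
      (L.map Prod.fst).SortedGT ∧ ∀ p ∈ L, p.1 ∈ S ∧ 1 ≤ p.2 ∧ p.2 ≤ N := by
  rw [mem_powLists]
  constructor
  · rintro ⟨hsub, hL⟩
    exact ⟨(S.sortedGT_sort.pairwise.sublist hsub).sortedGT, fun p hp =>
      ⟨(S.mem_sort _).1 (hsub.subset (List.mem_map_of_mem hp)), hL p hp⟩⟩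
  · rintro ⟨hsort, hL⟩
    refine ⟨List.sublist_of_subperm_of_sortedGE (hsort.nodup.subperm fun a ha => ?_)
      hsort.sortedGE (S.sortedGT_sort).sortedGE, fun p hp => (hL p hp).2⟩
    obtain ⟨p, hp, rfl⟩ := List.mem_map.1 ha
    exact (S.mem_sort _).2 (hL p hp).1

/-- The weight `∑ t * f α` of a list of pairs `(α, t)`. -/
def weightedSum (f : α → ℕ) (L : List (α × ℕ)) : ℕ :=
  (L.map fun p => p.2 * f p.1).sum

theorem weightedSum_consPow (f : α → ℕ) (a : α) (p : ℕ × List (α × ℕ)) :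
    weightedSum f (consPow a p) = p.1 * f a + weightedSum f p.2 := by
  rw [consPow]
  split_ifs with h <;> simp [weightedSum, h]

theorem le_weightedSum (f : α → ℕ) {L : List (α × ℕ)} {p : α × ℕ} (hp : p ∈ L) :
    p.2 * f p.1 ≤ weightedSum f L :=
  List.single_le_sum (by simp) _ (List.mem_map_of_mem hp)

theorem weightedSum_eq_zero {f : α → ℕ} {L : List (α × ℕ)}
    (hL : ∀ p ∈ L, 1 ≤ p.2 ∧ 0 < f p.1) : weightedSum f L = 0 ↔ L = [] := by
  refine ⟨fun h => List.eq_nil_iff_forall_not_mem.2 fun p hp => ?_,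
    fun h => by simp [h, weightedSum]⟩
  have := List.sum_eq_zero_iff.1 h _ (List.mem_map_of_mem hp)
  exact (Nat.mul_pos (hL p hp).1 (hL p hp).2).ne' this

end Expansion

section Terms

variable {X k A : Type*} [Field k] [Ring A] [Algebra k A]

/-- The product of the terms `((C α / |α|!) E α) ^ t / t!` over the pairs `(α, t)` of `L`. -/
def lyndonTerm (C : List X → k) (E : List X → A) (L : List (List X × ℕ)) : A :=
  (L.map fun p => (p.2 ! : k)⁻¹ • (normCoeff C p.1 • E p.1) ^ p.2).prod

theorem lyndonTerm_consPow (C : List X → k) (E : List X → A) (a : List X)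
    (p : ℕ × List (List X × ℕ)) :
    lyndonTerm C E (consPow a p) =
      ((p.1 ! : k)⁻¹ • (normCoeff C a • E a) ^ p.1) * lyndonTerm C E p.2 :=
  prod_consPow (f := fun a t => (t ! : k)⁻¹ • (normCoeff C a • E a) ^ t) (by simp) a p

theorem lyndonTerm_eq_inv_smul (C : List X → k) (E : List X → A) (L : List (List X × ℕ)) :
    lyndonTerm C E L = ((L.map fun p => (p.2 ! : k)).prod)⁻¹ •
      (L.map fun p => (normCoeff C p.1 • E p.1) ^ p.2).prod := by
  induction L with
  | nil => simp [lyndonTerm]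
  | cons p L ih =>
    rw [lyndonTerm] at ih ⊢
    simp only [List.map_cons, List.prod_cons, ih, smul_mul_smul_comm, mul_inv]

theorem factorial_smul_lyndonTerm_consPow [LinearOrder X] {C : List X → k} (hC : IsLyndonCoeff C)
    (E : List X → A) (x : X) (n : ℕ) (T : ℕ × List (List X × ℕ)) :
    (n ! : k) • lyndonTerm C E (consPow [x] T) =
      ((n ! : k) / ((T.1 ! : k) * (T.2.map fun p => (p.2 ! : k)).prod)) •
        (E [x] ^ T.1 * (T.2.map fun p => ((C p.1 / (p.1.length ! : k)) • E p.1) ^ p.2).prod) := by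
  have hx : normCoeff C [x] = 1 := by simp [normCoeff, hC.singleton]
  rw [lyndonTerm_consPow, lyndonTerm_eq_inv_smul, hx, one_smul, smul_mul_smul_comm, smul_smul,
    ← mul_inv, ← div_eq_mul_inv]
  rfl

theorem IsTruncatedLyndonShirshov.lyndonExpProd_eq_sum [LinearOrder X] [CharZero k] [Module ℚ A]
    {C : List X → k} {E : List X → A} {H : A} {N : ℕ} (hE : IsTruncatedLyndonShirshov N H E)
    {S : Finset (List X)} (hS : ∀ a ∈ S, a ≠ []) :
    lyndonExpProd C E S = ∑ L ∈ powLists N (S.sort (· ≥ ·)), lyndonTerm C E L := by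
  have hexp (a : List X) (ha : a ∈ S.sort (· ≥ ·)) :
      IsNilpotent.exp (normCoeff C a • E a) =
        ∑ t ∈ Finset.range (N + 1), (t ! : k)⁻¹ • (normCoeff C a • E a) ^ t := by
    have hpow : (normCoeff C a • E a) ^ (N + 1) = 0 := by
      rw [smul_pow, hE.pow_eq_zero a (hS a (by simpa using ha)), smul_zero]
    simp [IsNilpotent.exp_eq_sum hpow, ← Rat.cast_smul_eq_qsmul k]
  rw [lyndonExpProd, List.map_congr_left hexp,
    prod_map_sum_range (f := fun a t => (t ! : k)⁻¹ • (normCoeff C a • E a) ^ t) (by simp)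
      (S.sort_nodup _)]
  rfl

end Terms

section Grading

variable {X k R A : Type*} [CommRing k] [Ring R] [Algebra k R] [Ring A] [Algebra k A]

/-- A family of linear maps that multiply like `y ↦ y * T ^ d` for a central element `T`. -/
structure IsMonomialFamily (ρ : ℕ → R →ₗ[k] A) : Prop where
  map_one : ρ 0 1 = 1
  map_mul : ∀ d e y z, ρ (d + e) (y * z) = ρ d y * ρ e z

variable {ρ : ℕ → R →ₗ[k] A}

theorem IsMonomialFamily.map_pow (hρ : IsMonomialFamily ρ) (d : ℕ) (y : R) (n : ℕ) :
    ρ (n * d) (y ^ n) = ρ d y ^ n := by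
  induction n with
  | zero => simp [hρ.map_one]
  | succ n ih => rw [pow_succ, pow_succ, Nat.succ_mul, hρ.map_mul, ih]

theorem IsMonomialFamily.isLyndonShirshov [LinearOrder X] (hρ : IsMonomialFamily ρ)
    {E : List X → R} (hE : IsLyndonShirshov E) {f : List X → ℕ}
    (hf : ∀ u v, f (u ++ v) = f u + f v) : IsLyndonShirshov fun w => ρ (f w) (E w) := by
  intro u v huv hu hv hmax
  simp only [hE u v huv hu hv hmax, hf, map_sub, hρ.map_mul]
  rw [← hρ.map_mul (f v), add_comm (f v), hρ.map_mul]

theorem isMonomialFamily_monomial :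
    IsMonomialFamily fun d => (Polynomial.monomial (R := R) d).restrictScalars k where
  map_one := rfl
  map_mul d e y z := (Polynomial.monomial_mul_monomial d e y z).symm

variable (k R) in
/-- The matrix of size `N + 1` with constant `d`-th subdiagonal, playing the role of `y * T ^ d`
modulo `T ^ (N + 1)`. -/
def subdiagonal (N d : ℕ) : R →ₗ[k] Matrix (Fin (N + 1)) (Fin (N + 1)) R where
  toFun y := Matrix.of fun i j => if (i : ℕ) = j + d then y else 0
  map_add' y z := by ext i j; simp [apply_ite₂]
  map_smul' c y := by ext; simp

theorem subdiagonal_apply (N d : ℕ) (y : R) (i j : Fin (N + 1)) :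
    subdiagonal k R N d y i j = if (i : ℕ) = j + d then y else 0 := rfl

theorem subdiagonal_eq_zero {N d : ℕ} (hd : N < d) (y : R) : subdiagonal k R N d y = 0 := by
  ext i j
  rw [subdiagonal_apply, if_neg (by omega), Matrix.zero_apply]

theorem sum_subdiagonal_apply {ι : Type*} (N : ℕ) (T : Finset ι) (f : ι → ℕ) (g : ι → R)
    (i j : Fin (N + 1)) :
    (∑ p ∈ T, subdiagonal k R N (f p) (g p)) i j = ∑ p ∈ T with (i : ℕ) = j + f p, g p := by
  rw [Matrix.sum_apply, Finset.sum_filter]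
  rfl

theorem subdiagonal_mul_apply {N d : ℕ} (y : R) (M : Matrix (Fin (N + 1)) (Fin (N + 1)) R)
    {i l : Fin (N + 1)} (hil : (i : ℕ) = l + d) (j : Fin (N + 1)) :
    (subdiagonal k R N d y * M) i j = y * M l j := by
  rw [Matrix.mul_apply, Finset.sum_eq_single l]
  · rw [subdiagonal_apply, if_pos hil]
  · intro m _ hm
    rw [subdiagonal_apply, if_neg (fun him => hm (Fin.ext (by omega))), zero_mul]
  · simp

theorem mul_subdiagonal_apply {N d : ℕ} (y : R) (M : Matrix (Fin (N + 1)) (Fin (N + 1)) R)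
    (i : Fin (N + 1)) {j l : Fin (N + 1)} (hlj : (l : ℕ) = j + d) :
    (M * subdiagonal k R N d y) i j = M i l * y := by
  rw [Matrix.mul_apply, Finset.sum_eq_single l]
  · rw [subdiagonal_apply, if_pos hlj]
  · intro m _ hm
    rw [subdiagonal_apply, if_neg (fun hmj => hm (Fin.ext (by omega))), mul_zero]
  · simp

theorem isMonomialFamily_subdiagonal (N : ℕ) : IsMonomialFamily (subdiagonal k R N) where
  map_one := by
    ext i j
    simp [subdiagonal_apply, Matrix.one_apply, Fin.ext_iff]
  map_mul d e y z := by
    ext i j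
    by_cases hi : d ≤ i
    · rw [subdiagonal_mul_apply (l := ⟨i - d, by omega⟩) _ _ (by simp [hi]), subdiagonal_apply,
        subdiagonal_apply, mul_ite, mul_zero]
      exact if_congr (by simp; omega) rfl rfl
    · rw [subdiagonal_apply, if_neg (by omega), Matrix.mul_apply, Finset.sum_eq_zero]
      intro l _
      rw [subdiagonal_apply, if_neg (by omega), zero_mul]

theorem isTruncatedLyndonShirshov_subdiagonal [LinearOrder X] {E : List X → R}
    (hE : IsLyndonShirshov E) (N : ℕ) :
    IsTruncatedLyndonShirshov N (Matrix.diagonal fun i : Fin (N + 1) => ((i : ℕ) : R))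
      fun w => subdiagonal k R N w.length (E w) where
  isLyndonShirshov := (isMonomialFamily_subdiagonal N).isLyndonShirshov hE fun _ _ =>
    List.length_append
  eq_zero w hw := subdiagonal_eq_zero hw _
  pow_eq_zero w hw := by
    rw [← (isMonomialFamily_subdiagonal N).map_pow]
    exact subdiagonal_eq_zero (Nat.lt_of_succ_le
      (Nat.le_mul_of_pos_right _ (List.length_pos_iff.2 hw))) _
  commutator w := by
    ext i j
    simp only [Matrix.sub_apply, Matrix.diagonal_mul, Matrix.mul_diagonal, Matrix.smul_apply,
      subdiagonal_apply]
    split_ifs with h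
    · rw [h, ← (Nat.cast_commute (j : ℕ) (E w)).eq, ← sub_mul, Nat.cast_add, add_sub_cancel_left,
        nsmul_eq_mul]
    · simp

end Grading

theorem IsMonomialFamily.lyndonTerm_eq {X k R A : Type*} [Field k] [Ring R] [Algebra k R]
    [Ring A] [Algebra k A] {ρ : ℕ → R →ₗ[k] A} (hρ : IsMonomialFamily ρ) (C : List X → k)
    (E : List X → R) (f : List X → ℕ) (L : List (List X × ℕ)) :
    lyndonTerm C (fun w => ρ (f w) (E w)) L = ρ (weightedSum f L) (lyndonTerm C E L) := by
  induction L with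
  | nil => simp [lyndonTerm, weightedSum, hρ.map_one]
  | cons p L ih =>
    simp only [lyndonTerm, weightedSum, List.map_cons, List.prod_cons, List.sum_cons,
      hρ.map_mul, map_smul, hρ.map_pow] at ih ⊢
    rw [ih, ← map_smul]

section CompleteBell

variable {X k R : Type*} [LinearOrder X] [OrderBot X] [Fintype X] [Field k] [Ring R] [Algebra k R]
  {C : List X → k} {E : List X → R} {N : ℕ}

variable (C E) in
/-- The homogeneous part of degree `d` of the product of the truncated exponentials of
`(C α / |α|!) E α` over the Lyndon words `α ≠ ⊥` of length at most `N`, in decreasing order. -/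
noncomputable def homogeneousPart (N d : ℕ) : R :=
  ∑ L ∈ powLists N (((lyndonWords X N).erase [⊥]).sort (· ≥ ·)) with
    weightedSum List.length L = d, lyndonTerm C E L

theorem homogeneousPart_zero : homogeneousPart C E N 0 = 1 := by
  have hnil {L} (hL : L ∈ powLists N (((lyndonWords X N).erase [⊥]).sort (· ≥ ·))) :
      weightedSum List.length L = 0 ↔ L = [] := by
    obtain ⟨hsub, hL⟩ := mem_powLists.1 hL
    refine weightedSum_eq_zero fun p hp => ⟨(hL p hp).1, List.length_pos_iff.2 ?_⟩
    have := hsub.subset (List.mem_map_of_mem hp)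
    rw [Finset.mem_sort, Finset.mem_erase, mem_lyndonWords] at this
    exact this.2.1.1
  rw [homogeneousPart, Finset.filter_congr fun L hL => hnil hL, Finset.sum_filter,
    Finset.sum_ite_eq_of_mem' _ _ _ (mem_powLists.2 (by simp))]
  rfl

variable [CharZero k]

theorem succ_nsmul_homogeneousPart_succ (hE : IsLyndonShirshov E) (hC : IsLyndonCoeff C) {d : ℕ}
    (hd : d < N) :
    (d + 1) • homogeneousPart C E N (d + 1) =
      (∑ x, E [x]) * homogeneousPart C E N d - homogeneousPart C E N d * E [⊥] := by
  let _ : Module ℚ R := Module.compHom R (algebraMap ℚ k)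
  have hT := isTruncatedLyndonShirshov_subdiagonal (k := k) hE N
  have h := hT.sub_sum_mul_lyndonExpProd hC (Nat.zero_lt_of_lt hd)
  set K := lyndonExpProd C (fun w => subdiagonal k R N w.length (E w))
    ((lyndonWords X N).erase [⊥]) with hK
  have hKapp (i j : Fin (N + 1)) (e : ℕ) (hij : (i : ℕ) = j + e) :
      K i j = homogeneousPart C E N e := by
    rw [hK, hT.lyndonExpProd_eq_sum fun a ha =>
      (mem_lyndonWords.1 (Finset.mem_of_mem_erase ha)).1.1]
    simp only [(isMonomialFamily_subdiagonal N).lyndonTerm_eq, sum_subdiagonal_apply, hij,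
      add_right_inj, homogeneousPart, eq_comm (a := e)]
  set v := ∑ x, E [x] with hv
  have hsum : ∑ x, subdiagonal k R N [x].length (E [x]) = subdiagonal k R N 1 v := by
    rw [hv, map_sum]
    rfl
  let row : Fin (N + 1) := ⟨d + 1, by omega⟩
  have hentry := congrFun (congrFun h row) 0
  rw [hsum, sub_mul, mul_sub, Matrix.sub_apply, Matrix.sub_apply, Matrix.diagonal_mul,
    Matrix.mul_diagonal, subdiagonal_mul_apply (l := ⟨d, by omega⟩) _ _ rfl,
    mul_subdiagonal_apply (l := ⟨1, by omega⟩) _ _ _ (by simp), hKapp row 0 (d + 1) (by simp [row]),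
    hKapp ⟨d, by omega⟩ 0 d (by simp),
    hKapp row ⟨1, by omega⟩ d (by simp [row, add_comm])] at hentry
  simpa [row, sub_eq_iff_eq_add, neg_add_eq_sub, nsmul_eq_mul] using hentry

theorem eq_factorial_smul_homogeneousPart (hE : IsLyndonShirshov E) (hC : IsLyndonCoeff C)
    {b : ℕ → R} (hb0 : b 0 = 1) (hb : ∀ n, b (n + 1) = (∑ x, E [x]) * b n - b n * E [⊥]) {n : ℕ}
    (hn : n ≤ N) : b n = (n ! : k) • homogeneousPart C E N n := by
  induction n with
  | zero => simp [hb0, homogeneousPart_zero]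
  | succ n ih =>
    have h := succ_nsmul_homogeneousPart_succ hE hC hn
    rw [hb, ih (by omega), mul_smul_comm, smul_mul_assoc, ← smul_sub, ← h, Nat.factorial_succ,
      mul_comm, Nat.cast_mul, mul_smul, Nat.cast_smul_eq_nsmul k (n + 1)]

end CompleteBell

section PartialBell

variable {R : Type*} [Ring R]

/-- The family `B n m` satisfies the defining recursion of the partial Bell differential
polynomials in `b` and its iterated derivatives, for the derivation `y ↦ a * y - y * a`. -/
structure IsPartialBell (a b : R) (B : ℕ → ℕ → R) : Prop where
  zero_zero : B 0 0 = 1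
  succ_zero : ∀ n, B (n + 1) 0 = 0
  eq_zero_of_lt : ∀ n m, n < m → B n m = 0
  succ_succ : ∀ n m, B (n + 1) (m + 1) = b * B n m + a * B n (m + 1) - B n (m + 1) * a

variable {a b : R} {B : ℕ → ℕ → R}

/-- The generating polynomial `∑ m, B n m T ^ m` of the `n`-th row of `B`. -/
noncomputable def rowPoly (B : ℕ → ℕ → R) (n : ℕ) : Polynomial R :=
  ∑ m ∈ Finset.range (n + 1), Polynomial.monomial m (B n m)

theorem IsPartialBell.coeff_rowPoly (hB : IsPartialBell a b B) (n m : ℕ) :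
    (rowPoly B n).coeff m = B n m := by
  simp only [rowPoly, Polynomial.finsetSum_coeff, Polynomial.coeff_monomial,
    Finset.sum_ite_eq', Finset.mem_range]
  split_ifs with hm
  · rfl
  · exact (hB.eq_zero_of_lt n m (by omega)).symm

theorem IsPartialBell.commutator_eq_zero (hB : IsPartialBell a b B) (n : ℕ) :
    a * B n 0 - B n 0 * a = 0 := by
  cases n with
  | zero => simp [hB.zero_zero]
  | succ n => simp [hB.succ_zero]

theorem IsPartialBell.rowPoly_succ (hB : IsPartialBell a b B) (n : ℕ) :
    rowPoly B (n + 1) =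
      (Polynomial.monomial 0 a + Polynomial.monomial 1 b) * rowPoly B n -
        rowPoly B n * Polynomial.monomial 0 a := by
  ext m
  simp only [add_mul, Polynomial.coeff_sub, Polynomial.coeff_add, Polynomial.monomial_zero_left,
    Polynomial.coeff_C_mul, Polynomial.coeff_mul_C, hB.coeff_rowPoly]
  cases m with
  | zero =>
    rw [← Polynomial.C_mul_X_eq_monomial, mul_assoc, Polynomial.coeff_C_mul,
      Polynomial.coeff_X_mul_zero, mul_zero, add_zero, hB.commutator_eq_zero, hB.succ_zero]
  | succ m =>
    rw [Polynomial.coeff_monomial_mul, hB.coeff_rowPoly, hB.succ_succ, add_comm (b * _)]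

end PartialBell

section BinaryAlphabet

variable {k R : Type*} [Field k] [CharZero k] [Ring R] [Algebra k R]
  {C : List (Fin 2) → k} {E : List (Fin 2) → R} {B : ℕ → ℕ → R}

theorem IsPartialBell.eq_factorial_smul_sum (hB : IsPartialBell (E [0]) (E [1]) B)
    (hE : IsLyndonShirshov E) (hC : IsLyndonCoeff C) {n N : ℕ} (hn : n ≤ N) (m : ℕ) :
    B n m = (n ! : k) • ∑ L ∈ powLists N (((lyndonWords (Fin 2) N).erase [0]).sort (· ≥ ·)) with
      weightedSum List.length L = n ∧ weightedSum (List.count 1) L = m, lyndonTerm C E L := by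
  have hmon := isMonomialFamily_monomial (k := k) (R := R)
  have h := eq_factorial_smul_homogeneousPart
    (hmon.isLyndonShirshov hE (f := List.count 1) fun _ _ => List.count_append) hC
    (b := rowPoly B) (by simp [rowPoly, hB.zero_zero])
    (fun n => by rw [Fin.sum_univ_two]; exact hB.rowPoly_succ n) hn
  rw [← hB.coeff_rowPoly, h, homogeneousPart, Polynomial.coeff_smul]
  simp only [hmon.lyndonTerm_eq]
  simp only [Polynomial.finsetSum_coeff, LinearMap.coe_restrictScalars,
    Polynomial.coeff_monomial, ← Finset.sum_filter, Finset.filter_filter]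
  rfl

theorem weightedSum_length (L : List (List (Fin 2) × ℕ)) :
    weightedSum List.length L =
      weightedSum (List.count 0) L + weightedSum (List.count 1) L := by
  have hlen (w : List (Fin 2)) : w.length = w.count 0 + w.count 1 := by
    induction w with
    | nil => rfl
    | cons x w ih => fin_cases x <;> simp [ih] <;> omega
  simp only [weightedSum, hlen, mul_add, List.sum_map_add]

theorem sort_lyndonWords_erase {N : ℕ} (hN : 0 < N) :
    ((lyndonWords (Fin 2) N).erase [0]).sort (· ≥ ·) =
      [1] :: (((lyndonWords (Fin 2) N).erase [0]).erase [1]).sort (· ≥ ·) := by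
  have hmem : [1] ∈ (lyndonWords (Fin 2) N).erase [0] :=
    Finset.mem_erase.2 ⟨by simp, mem_lyndonWords.2 ⟨isLyndon_singleton 1, hN⟩⟩
  conv_lhs => rw [← Finset.insert_erase hmem]
  refine Finset.sort_insert (r := (· ≥ ·)) (fun w hw => ?_) (Finset.notMem_erase _ _)
  have hlyn := (mem_lyndonWords.1 (Finset.mem_of_mem_erase (Finset.mem_of_mem_erase hw))).1
  exact hlyn.le_singleton_top

theorem mem_lyndonWords_erase_erase {N : ℕ} {w : List (Fin 2)} :
    w ∈ ((lyndonWords (Fin 2) N).erase [0]).erase [1] ↔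
      IsLyndon w ∧ [0] < w ∧ w < [1] ∧ w.length ≤ N := by
  simp only [Finset.mem_erase, mem_lyndonWords]
  constructor
  · rintro ⟨h1, h0, hw, hN⟩
    exact ⟨hw, (singleton_bot_le hw.1).lt_of_ne' h0, hw.le_singleton_top.lt_of_ne h1, hN⟩
  · rintro ⟨hw, h0, h1, hN⟩
    exact ⟨h1.ne, h0.ne', hw, hN⟩

/-- The index set of the Bell expansion: `(t₀, L)` encodes the power `t₀` of the letter `2` and the
powers of the Lyndon words strictly between `1` and `2`. -/
def bellIndices (n m : ℕ) : Set (ℕ × List (List (Fin 2) × ℕ)) :=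
  {T | (∀ p ∈ T.2, IsLyndon p.1 ∧ 1 ≤ p.2 ∧ [0] < p.1 ∧ p.1 < [1]) ∧
    T.2.IsChain (fun p q => q.1 < p.1) ∧ T.1 + weightedSum (List.count 1) T.2 = m ∧
    weightedSum (List.count 0) T.2 + m = n}

theorem coe_filter_eq_bellIndices {n m N : ℕ} (hn : n ≤ N) :
    (↑{T ∈ Finset.range (N + 1) ×ˢ
          powLists N ((((lyndonWords (Fin 2) N).erase [0]).erase [1]).sort (· ≥ ·)) |
        weightedSum List.length (consPow [1] T) = n ∧
          weightedSum (List.count 1) (consPow [1] T) = m} :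
      Set (ℕ × List (List (Fin 2) × ℕ))) = bellIndices n m := by
  ext ⟨t, L⟩
  have hlen := weightedSum_length L
  simp only [Finset.coe_filter, Finset.mem_product, Finset.mem_range, mem_powLists_sort,
    List.sortedGT_iff_isChain, List.isChain_map, mem_lyndonWords_erase_erase, weightedSum_consPow,
    List.length_singleton, List.count_singleton_self, mul_one, bellIndices, Set.mem_ofPred_eq]
  constructor
  · rintro ⟨⟨-, hsort, hL⟩, hn, hm⟩
    refine ⟨fun p hp => ?_, hsort, hm, by omega⟩
    obtain ⟨⟨hw, h0, h1, -⟩, ht, -⟩ := hL p hp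
    exact ⟨hw, ht, h0, h1⟩
  · rintro ⟨hL, hsort, hm, hn⟩
    refine ⟨⟨by omega, hsort, fun p hp => ?_⟩, by omega, hm⟩
    obtain ⟨hw, ht, h0, h1⟩ := hL p hp
    have hle := le_weightedSum List.length hp
    have hpos := List.length_pos_iff.2 hw.1
    have := Nat.le_mul_of_pos_left p.1.length ht
    have := Nat.le_mul_of_pos_right p.2 hpos
    exact ⟨⟨hw, h0, h1, by omega⟩, ht, by omega⟩

theorem IsPartialBell.eq_finsum (hB : IsPartialBell (E [0]) (E [1]) B) (hE : IsLyndonShirshov E)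
    (hC : IsLyndonCoeff C) (n m : ℕ) :
    B n m = ∑ᶠ T ∈ bellIndices n m, (n ! : k) • lyndonTerm C E (consPow [1] T) := by
  rw [← coe_filter_eq_bellIndices n.le_succ, finsum_mem_coe_finset, ← Finset.smul_sum,
    Finset.sum_filter, hB.eq_factorial_smul_sum hE hC n.le_succ, sort_lyndonWords_erase n.succ_pos,
    Finset.sum_filter, sum_powLists_cons]
  simp [Finset.mem_sort]

end BinaryAlphabet

theorem stmt_19_general (k : Type*) [Field k] [CharZero k] (R : Type*) [Ring R] [Algebra k R]
    (E : List (Fin 2) → R) (hE : IsLyndonShirshov E) (C : List (Fin 2) → k) (hC : IsLyndonCoeff C)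
    (B : ℕ → ℕ → R) (hB : IsPartialBell (E [0]) (E [1]) B) (n m : ℕ) :
    B n m =
      ∑ᶠ T ∈ bellIndices n m,
        ((n ! : k) /
            ((T.1 ! : k) * (T.2.map fun p => (p.2 ! : k)).prod)) •
          (E [1] ^ T.1 *
            (T.2.map fun p => ((C p.1 / (p.1.length ! : k)) • E p.1) ^ p.2).prod) := by
  simp only [← factorial_smul_lyndonTerm_consPow hC, hB.eq_finsum hE hC n m]

/-- Corollary `cor:Bell-diff-poly-by-LS-basis`: expression of the partial Bell
differential polynomials `B_{n,m}` in the Lyndon–Shirshov basis.  The alphabet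
`{1 ≺ 2}` is `Fin 2` (letter `1` is `0`, letter `2` is `1`); `E` and `C` are the
Lyndon–Shirshov basis and coefficient function, and `B` the partial Bell
differential polynomials, all characterized by the stated hypotheses.  The sum
over tuples `2 ≻ α₁ ≻ ⋯ ≻ α_r ≻ 1` with multiplicities `t₁, …, t_r ≥ 1` and a
power `E(2)^{t₀}` is encoded by pairs `(t₀, L)`. -/
theorem stmt_19 (k : Type*) [Field k] [CharZero k]
    (E : List (Fin 2) → FreeAlgebra k (Fin 2))
    (hE1 : ∀ x : Fin 2, E [x] = FreeAlgebra.ι k x)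
    (hE2 : ∀ αL αR : List (Fin 2), IsLyndon (αL ++ αR) → αL ≠ [] → IsLyndon αR →
      (∀ δ β' : List (Fin 2), αL ++ αR = β' ++ δ → β' ≠ [] → IsLyndon δ →
        δ.length ≤ αR.length) →
      E (αL ++ αR) = E αL * E αR - E αR * E αL)
    (C : List (Fin 2) → k)
    (hC1 : ∀ x : Fin 2, C [x] = 1)
    (hC2 : ∀ (x : Fin 2) (w : List (Fin 2)) (L : List (List (Fin 2) × ℕ)),
      IsLyndon (x :: w) → w ≠ [] →
      (∀ p ∈ L, IsLyndon p.1 ∧ 1 ≤ p.2) →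
      L.Chain' (fun p q => List.Lex (· < ·) q.1 p.1) →
      (L.map fun p => (List.replicate p.2 p.1).flatten).flatten = w →
      C (x :: w) =
        (w.length.factorial : k) /
            (L.map fun p => (p.1.length.factorial : k) ^ p.2 * (p.2.factorial : k)).prod *
          (L.map fun p => C p.1 ^ p.2).prod)
    (B : ℕ → ℕ → FreeAlgebra k (Fin 2))
    (hB00 : B 0 0 = 1)
    (hB0 : ∀ n : ℕ, 0 < n → B n 0 = 0)
    (hBgt : ∀ n m : ℕ, n < m → B n m = 0)
    (hBrec : ∀ n m : ℕ,
      B (n + 1) (m + 1) = E [1] * B n m + E [0] * B n (m + 1) - B n (m + 1) * E [0])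
    (n m : ℕ) :
    B n m =
      ∑ᶠ T ∈ {T : ℕ × List (List (Fin 2) × ℕ) |
          (∀ p ∈ T.2, IsLyndon p.1 ∧ 1 ≤ p.2 ∧
            List.Lex (· < ·) [(0 : Fin 2)] p.1 ∧ List.Lex (· < ·) p.1 [(1 : Fin 2)]) ∧
          T.2.Chain' (fun p q => List.Lex (· < ·) q.1 p.1) ∧
          T.1 + (T.2.map fun p => p.2 * p.1.count 1).sum = m ∧
          (T.2.map fun p => p.2 * p.1.count 0).sum + m = n},
        ((n.factorial : k) /
            ((T.1.factorial : k) * (T.2.map fun p => (p.2.factorial : k)).prod)) •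
          (E [1] ^ T.1 *
            (T.2.map fun p => ((C p.1 / (p.1.length.factorial : k)) • E p.1) ^ p.2).prod) :=
  stmt_19_general k _ E hE2 C
    ⟨hC1, fun x w L hw hw0 hL => hC2 x w L hw hw0 (fun p hp => ⟨hL.isLyndon p hp, hL.one_le p hp⟩)
      ((List.isChain_map _).1 hL.sortedGT.isChain) hL.flatten⟩
    B ⟨hB00, fun n => hB0 _ n.succ_pos, hBgt, hBrec⟩ n m
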